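/- arXiv:2305.03549 — 2 statements merged into one kernel-verified Lean document; each statement's English description precedes it below -/
import Mathlib

section
/- The variance of A_∞ with respect to (r,θ) uniform on [-1/√2,1/√2] × [0,2π) equals c₀ = 1/4 - (1/(2π√2))(4/15 + 2 log(1+√2)/3 + 2√2/15). -/
open Real MeasureTheory

/-- The unit square tilted by angle `θ` and centered at `(r, 0)`. -/
noncomputable def tiltedSquare (r θ : ℝ) : Set (ℝ × ℝ) :=
  {p | ∃ x y : ℝ, |x| ≤ 1/2 ∧ |y| ≤ 1/2 ∧
    p = (r + x * Real.cos θ - y * Real.sin θ, x * Real.sin θ + y * Real.cos θ)}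

/-- The area of the portion of the tilted shifted unit square lying in the left half-plane. -/
noncomputable def Ainf (r θ : ℝ) : ℝ :=
  (volume (tiltedSquare r θ ∩ {p : ℝ × ℝ | p.1 ≤ 0})).toReal

/-- The part of the centered unit square lying in a half-plane with normal `(c, -s)`. -/
def squareCut (c s r : ℝ) : Set (ℝ × ℝ) :=
  {p | |p.1| ≤ 1/2 ∧ |p.2| ≤ 1/2 ∧ r + p.1 * c - p.2 * s ≤ 0}

lemma measurableSet_squareCut (c s r : ℝ) : MeasurableSet (squareCut c s r) := by
  have h : Continuous fun p : ℝ × ℝ => r + p.1 * c - p.2 * s := by fun_prop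
  exact ((isClosed_le continuous_fst.abs continuous_const).inter
    ((isClosed_le continuous_snd.abs continuous_const).inter
      (isClosed_le h continuous_const))).measurableSet

lemma volume_image_prod_of_abs_det_eq_one {a b c d : ℝ} (h : |a * d - b * c| = 1)
    (S : Set (ℝ × ℝ)) :
    volume ((fun p : ℝ × ℝ => (a * p.1 + b * p.2, c * p.1 + d * p.2)) '' S) = volume S := by
  have key := Measure.addHaar_image_linearMap (volume : Measure (ℝ × ℝ))
    (Matrix.toLin (.finTwoProd ℝ) (.finTwoProd ℝ) !![a, b; c, d]) S
  rw [LinearMap.det_toLin, Matrix.det_fin_two_of, h, ENNReal.ofReal_one, one_mul] at key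
  rw [← key]
  congr 1
  ext p
  simp [Matrix.toLin_finTwoProd_apply]

lemma Ainf_eq_squareCut (r θ : ℝ) :
    Ainf r θ = (volume (squareCut (cos θ) (sin θ) r)).toReal := by
  unfold Ainf
  congr 1
  rw [← volume_image_prod_of_abs_det_eq_one (a := cos θ) (b := -sin θ) (c := sin θ) (d := cos θ)
      (by rw [show cos θ * cos θ - -sin θ * sin θ = 1 by linarith [sin_sq_add_cos_sq θ]]; simp)
      (squareCut _ _ _),
    ← measure_preimage_add volume (r, (0 : ℝ))]
  congr 1
  ext ⟨u, v⟩
  simp only [tiltedSquare, squareCut, Set.mem_preimage, Set.mem_inter_iff, Set.mem_ofPred_eq,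
    Set.mem_image, Prod.exists, Prod.mk.injEq, Prod.mk_add_mk]
  constructor
  · rintro ⟨⟨x, y, hx, hy, h1, h2⟩, h3⟩
    exact ⟨x, y, ⟨hx, hy, by linarith⟩, by linarith, by linarith⟩
  · rintro ⟨x, y, ⟨hx, hy, h⟩, h1, h2⟩
    exact ⟨⟨x, y, hx, hy, by linarith, by linarith⟩, by linarith⟩

lemma volume_squareCut_swap (c s r : ℝ) : volume (squareCut s c r) = volume (squareCut c s r) := by
  rw [← volume_image_prod_of_abs_det_eq_one (a := 0) (b := -1) (c := -1) (d := 0) (by norm_num)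
    (squareCut c s r)]
  congr 1
  ext ⟨u, v⟩
  simp only [squareCut, Set.mem_ofPred_eq, Set.mem_image, Prod.exists, Prod.mk.injEq]
  constructor
  · rintro ⟨h1, h2, h3⟩
    exact ⟨-v, -u, ⟨by rwa [abs_neg], by rwa [abs_neg], by linarith⟩, by ring, by ring⟩
  · rintro ⟨x, y, ⟨h1, h2, h3⟩, rfl, rfl⟩
    exact ⟨by simpa using h2, by simpa using h1, by linarith⟩

lemma volume_squareCut_neg_right (c s r : ℝ) :
    volume (squareCut c (-s) r) = volume (squareCut c s r) := by
  rw [← volume_image_prod_of_abs_det_eq_one (a := 1) (b := 0) (c := 0) (d := -1) (by norm_num)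
    (squareCut c s r)]
  congr 1
  ext ⟨u, v⟩
  simp only [squareCut, Set.mem_ofPred_eq, Set.mem_image, Prod.exists, Prod.mk.injEq]
  constructor
  · rintro ⟨h1, h2, h3⟩
    exact ⟨u, -v, ⟨h1, by rwa [abs_neg], by linarith⟩, by ring, by ring⟩
  · rintro ⟨x, y, ⟨h1, h2, h3⟩, rfl, rfl⟩
    exact ⟨by simpa using h1, by simpa using h2, by linarith⟩

lemma Ainf_add_pi_div_two (r θ : ℝ) : Ainf r (θ + π / 2) = Ainf r θ := by
  rw [Ainf_eq_squareCut, Ainf_eq_squareCut, cos_add_pi_div_two, sin_add_pi_div_two,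
    ← volume_squareCut_swap, volume_squareCut_neg_right]

lemma Ainf_pi_div_two_sub (r θ : ℝ) : Ainf r (π / 2 - θ) = Ainf r θ := by
  rw [Ainf_eq_squareCut, Ainf_eq_squareCut, cos_pi_div_two_sub, sin_pi_div_two_sub,
    volume_squareCut_swap]

/-- The area of `squareCut c s r` as an integral over horizontal slices. -/
noncomputable def sliceArea (c s r : ℝ) : ℝ :=
  ∫ y in (-(1/2) : ℝ)..(1/2), max 0 (min 1 ((y * s - r) / c + 1/2))

lemma volume_squareCut {c : ℝ} (hc : 0 < c) (s r : ℝ) :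
    (volume (squareCut c s r)).toReal = sliceArea c s r := by
  have hslice (y : ℝ) : volume ((fun x => (x, y)) ⁻¹' squareCut c s r) =
      (Set.Icc (-(1/2) : ℝ) (1/2)).indicator
        (fun y => ENNReal.ofReal (max 0 (min 1 ((y * s - r) / c + 1/2)))) y := by
    by_cases hy : y ∈ Set.Icc (-(1/2) : ℝ) (1/2)
    · have hset : (fun x => (x, y)) ⁻¹' squareCut c s r =
          Set.Icc (-(1/2)) (min (1/2) ((y * s - r) / c)) := by
        ext x
        simp only [squareCut, Set.mem_preimage, Set.mem_ofPred_eq, Set.mem_Icc, abs_le,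
          le_min_iff, le_div_iff₀ hc] at hy ⊢
        constructor
        · rintro ⟨⟨h1, h2⟩, -, h3⟩
          exact ⟨h1, h2, by linarith⟩
        · rintro ⟨h1, h2, h3⟩
          exact ⟨⟨h1, h2⟩, hy, by linarith⟩
      rw [hset, Real.volume_Icc, Set.indicator_of_mem hy, sub_neg_eq_add, ← min_add_add_right,
        max_comm, ENNReal.ofReal_max]
      norm_num
    · have hset : (fun x => (x, y)) ⁻¹' squareCut c s r = ∅ := by
        ext x
        simp only [squareCut, Set.mem_preimage, Set.mem_ofPred_eq, Set.mem_Icc, abs_le,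
          Set.mem_empty_iff_false, iff_false] at hy ⊢
        exact fun h => hy h.2.1
      rw [hset, measure_empty, Set.indicator_of_notMem hy]
  have hcont : Continuous fun y : ℝ => max 0 (min 1 ((y * s - r) / c + 1/2)) := by fun_prop
  rw [Measure.volume_eq_prod, Measure.prod_apply_symm (measurableSet_squareCut c s r)]
  simp_rw [hslice]
  rw [lintegral_indicator measurableSet_Icc,
    ← ofReal_integral_eq_lintegral_ofReal hcont.integrableOn_Icc
      (Filter.Eventually.of_forall fun y => le_max_left _ _), integral_Icc_eq_integral_Ioc,
    ← intervalIntegral.integral_of_le (by norm_num), ENNReal.toReal_ofReal, sliceArea]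
  exact intervalIntegral.integral_nonneg (by norm_num) fun y _ => le_max_left _ _

lemma continuous_sliceArea (c s : ℝ) : Continuous (sliceArea c s) := by
  unfold sliceArea
  apply intervalIntegral.continuous_parametric_intervalIntegral_of_continuous'
  fun_prop

lemma sliceArea_neg (c s r : ℝ) : sliceArea c s (-r) = 1 - sliceArea c s r := by
  have hcont : Continuous fun y : ℝ => max 0 (min 1 ((y * s - r) / c + 1/2)) := by fun_prop
  have h1 : sliceArea c s (-r) =
      ∫ y in (-(1/2) : ℝ)..(1/2), (1 - max 0 (min 1 ((y * s - r) / c + 1/2))) := by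
    rw [sliceArea, ← neg_neg (1/2 : ℝ), ← intervalIntegral.integral_comp_neg, neg_neg]
    refine intervalIntegral.integral_congr fun y _ => ?_
    rw [show (-y * s - -r) / c + 1/2 = 1 - ((y * s - r) / c + 1/2) by ring]
    generalize (y * s - r) / c + 1/2 = z
    grind
  rw [h1, intervalIntegral.integral_sub (by simp) (hcont.intervalIntegrable _ _), sliceArea]
  norm_num

lemma sliceArea_eq_of_le {c s r : ℝ} (hs : 0 ≤ s) (hc : 0 < c) (hr : 0 ≤ r)
    (h : r ≤ (c - s) / 2) : sliceArea c s r = 1/2 - r / c := by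
  have h1 : sliceArea c s r = ∫ y in (-(1/2) : ℝ)..(1/2), (y * (s / c) + (1/2 - r / c)) := by
    refine intervalIntegral.integral_congr fun y hy => ?_
    rw [Set.uIcc_of_le (by norm_num)] at hy
    have hz0 : 0 ≤ (y * s - r) / c + 1/2 := by
      rw [div_add_div _ _ hc.ne' two_ne_zero]
      apply div_nonneg _ (by positivity)
      nlinarith [hy.1]
    have hz1 : (y * s - r) / c + 1/2 ≤ 1 := by
      rw [div_add_div _ _ hc.ne' two_ne_zero, div_le_one (by positivity)]
      nlinarith [hy.2]
    rw [min_eq_right hz1, max_eq_right hz0]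
    ring
  rw [h1, intervalIntegral.integral_add (Continuous.intervalIntegrable (by fun_prop) _ _) (by simp),
    intervalIntegral.integral_mul_const, integral_id, intervalIntegral.integral_const]
  norm_num

lemma sliceArea_eq_of_le_of_le {c s r : ℝ} (hs : 0 < s) (hsc : s ≤ c)
    (h1 : (c - s) / 2 ≤ r) (h2 : r ≤ (c + s) / 2) :
    sliceArea c s r = ((c + s) / 2 - r) ^ 2 / (2 * c * s) := by
  have hc : 0 < c := hs.trans_le hsc
  have hcont : Continuous fun y : ℝ => max 0 (min 1 ((y * s - r) / c + 1/2)) := by fun_prop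
  set t := (r - c / 2) / s with ht
  have hts : t * s = r - c / 2 := by rw [ht]; field_simp
  have ht1 : -(1/2) ≤ t := by rw [ht, le_div_iff₀ hs]; linarith
  have ht2 : t ≤ 1/2 := by rw [ht, div_le_iff₀ hs]; linarith
  have hz (y : ℝ) : (y * s - r) / c + 1/2 = (y - t) * (s / c) := by
    rw [sub_mul, ← mul_div_assoc, ← mul_div_assoc, hts]; field_simp; ring
  rw [sliceArea, ← intervalIntegral.integral_add_adjacent_intervals
    (hcont.intervalIntegrable _ t) (hcont.intervalIntegrable t _)]
  have hleft : ∫ y in (-(1/2) : ℝ)..t, max 0 (min 1 ((y * s - r) / c + 1/2)) = 0 := by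
    refine (intervalIntegral.integral_congr (g := fun _ => 0) fun y hy => ?_).trans
      intervalIntegral.integral_zero
    rw [Set.uIcc_of_le ht1] at hy
    rw [hz]
    apply max_eq_left ((min_le_right _ _).trans _)
    exact mul_nonpos_of_nonpos_of_nonneg (by linarith [hy.2]) (by positivity)
  have hright : ∫ y in t..(1/2), max 0 (min 1 ((y * s - r) / c + 1/2)) =
      ∫ y in t..(1/2), (y - t) * (s / c) := by
    refine intervalIntegral.integral_congr fun y hy => ?_
    rw [Set.uIcc_of_le ht2] at hy
    have hle : (y - t) * (s / c) ≤ 1 := by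
      have : s / c ≤ 1 := (div_le_one hc).2 hsc
      have : 0 ≤ s / c := by positivity
      nlinarith [hy.1, hy.2]
    rw [hz, min_eq_right hle, max_eq_right]
    exact mul_nonneg (by linarith [hy.1]) (by positivity)
  rw [hleft, hright, intervalIntegral.integral_mul_const,
    intervalIntegral.integral_sub (Continuous.intervalIntegrable (by fun_prop) _ _) (by simp),
    integral_id, intervalIntegral.integral_const, smul_eq_mul, ht]
  field_simp
  ring

lemma sliceArea_eq_zero {c s r : ℝ} (hs : 0 ≤ s) (hc : 0 < c) (h : (c + s) / 2 ≤ r) :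
    sliceArea c s r = 0 := by
  refine (intervalIntegral.integral_congr (g := fun _ => 0) fun y hy => ?_).trans
    intervalIntegral.integral_zero
  rw [Set.uIcc_of_le (by norm_num)] at hy
  apply max_eq_left ((min_le_right _ _).trans _)
  rw [div_add_div _ _ hc.ne' two_ne_zero]
  apply div_nonpos_of_nonpos_of_nonneg _ (by positivity)
  nlinarith [hy.2]

lemma integral_symm_eq_of_continuous {f : ℝ → ℝ} (hf : Continuous f) (R : ℝ) :
    ∫ r in -R..R, f r = ∫ r in (0:ℝ)..R, (f r + f (-r)) := by
  rw [intervalIntegral.integral_add (hf.intervalIntegrable _ _)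
      (Continuous.intervalIntegrable (by fun_prop) _ _), intervalIntegral.integral_comp_neg,
    neg_zero, add_comm, intervalIntegral.integral_add_adjacent_intervals
      (hf.intervalIntegrable _ _) (hf.intervalIntegrable _ _)]

lemma integral_sliceArea (c s R : ℝ) : ∫ r in -R..R, sliceArea c s r = R := by
  rw [integral_symm_eq_of_continuous (continuous_sliceArea c s)]
  simp [sliceArea_neg]

lemma integral_sliceArea_mul_one_sub {c s R : ℝ} (hs : 0 < s) (hsc : s ≤ c)
    (hR : (c + s) / 2 ≤ R) :
    ∫ r in (0:ℝ)..R, sliceArea c s r * (1 - sliceArea c s r) =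
      (c / 6 + s ^ 2 / (12 * c) - s ^ 3 / (60 * c ^ 2)) / 2 := by
  have hc : 0 < c := hs.trans_le hsc
  have hA := continuous_sliceArea c s
  have hcont : Continuous fun r => sliceArea c s r * (1 - sliceArea c s r) := by fun_prop
  have hint (a b : ℝ) := hcont.intervalIntegrable (μ := volume) a b
  rw [← intervalIntegral.integral_add_adjacent_intervals (hint 0 ((c + s) / 2)) (hint _ _),
    ← intervalIntegral.integral_add_adjacent_intervals (hint 0 ((c - s) / 2)) (hint _ _)]
  have e1 : ∫ r in (0:ℝ)..((c - s) / 2), sliceArea c s r * (1 - sliceArea c s r) =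
      ∫ r in (0:ℝ)..((c - s) / 2), (1/4 - r ^ 2 * (1 / c ^ 2)) := by
    refine intervalIntegral.integral_congr fun r hr => ?_
    rw [Set.uIcc_of_le (by linarith)] at hr
    rw [sliceArea_eq_of_le hs.le hc hr.1 hr.2]
    ring
  have e2 : ∫ r in ((c - s) / 2)..((c + s) / 2), sliceArea c s r * (1 - sliceArea c s r) =
      ∫ t in ((c + s) / 2 - (c + s) / 2)..((c + s) / 2 - (c - s) / 2),
        (t ^ 2 * (1 / (2 * c * s)) - t ^ 4 * (1 / (2 * c * s)) ^ 2) := by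
    refine (intervalIntegral.integral_congr fun r hr => ?_).trans
      (intervalIntegral.integral_comp_sub_left
        (fun t => t ^ 2 * (1 / (2 * c * s)) - t ^ 4 * (1 / (2 * c * s)) ^ 2) ((c + s) / 2))
    rw [Set.uIcc_of_le (by linarith)] at hr
    rw [sliceArea_eq_of_le_of_le hs hsc hr.1 hr.2]
    ring
  have e3 : ∫ r in ((c + s) / 2)..R, sliceArea c s r * (1 - sliceArea c s r) = 0 := by
    refine (intervalIntegral.integral_congr (g := fun _ => 0) fun r hr => ?_).trans
      intervalIntegral.integral_zero
    rw [Set.uIcc_of_le hR] at hr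
    rw [sliceArea_eq_zero hs.le hc hr.1]
    ring
  rw [e1, e2, e3,
    intervalIntegral.integral_sub (by simp) (Continuous.intervalIntegrable (by fun_prop) _ _),
    intervalIntegral.integral_sub (Continuous.intervalIntegrable (by fun_prop) _ _)
      (Continuous.intervalIntegrable (by fun_prop) _ _),
    intervalIntegral.integral_const, intervalIntegral.integral_mul_const,
    intervalIntegral.integral_mul_const, intervalIntegral.integral_mul_const,
    integral_pow, integral_pow, integral_pow, smul_eq_mul]
  field_simp
  ring

lemma integral_sliceArea_sq {c s R : ℝ} (hs : 0 < s) (hsc : s ≤ c) (hR : (c + s) / 2 ≤ R) :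
    ∫ r in -R..R, sliceArea c s r ^ 2 =
      R - (c / 6 + s ^ 2 / (12 * c) - s ^ 3 / (60 * c ^ 2)) := by
  have hA := continuous_sliceArea c s
  rw [integral_symm_eq_of_continuous (by fun_prop)]
  have h1 : ∀ r, sliceArea c s r ^ 2 + sliceArea c s (-r) ^ 2 =
      1 - 2 * (sliceArea c s r * (1 - sliceArea c s r)) := by
    intro r
    rw [sliceArea_neg]
    ring
  simp_rw [h1]
  rw [intervalIntegral.integral_sub (by simp) (Continuous.intervalIntegrable (by fun_prop) _ _),
    intervalIntegral.integral_const_mul, integral_sliceArea_mul_one_sub hs hsc hR]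
  simp
  ring

lemma integral_eq_of_symm_of_eqOn {F g : ℝ → ℝ} (hper : ∀ θ, F (θ + π / 2) = F θ)
    (hsymm : ∀ θ, F (π / 2 - θ) = F θ) (hg : ContinuousOn g (Set.Icc 0 (π / 4)))
    (hFg : Set.EqOn F g (Set.Ioo 0 (π / 4))) :
    ∫ θ in (0:ℝ)..(2 * π), F θ = 8 * ∫ θ in (0:ℝ)..(π / 4), g θ := by
  have hpi := pi_pos
  have hI : Set.uIoo 0 (π / 4) = Set.Ioo 0 (π / 4) := Set.uIoo_of_le (by positivity)
  have hint1 : IntervalIntegrable F volume 0 (π / 4) :=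
    (hg.intervalIntegrable_of_Icc (by positivity)).congr_uIoo (by rw [hI]; exact hFg.symm)
  have hint2 : IntervalIntegrable F volume (π / 4) (π / 2) := by
    have := (hint1.comp_sub_left (π / 2)).symm
    simp_rw [hsymm] at this
    rwa [sub_zero, show π / 2 - π / 4 = π / 4 by ring] at this
  have hP : Function.Periodic F (π / 2) := hper
  have hint := hP.intervalIntegrable₀ (by positivity) (hint1.trans hint2)
  have h4 := hP.intervalIntegral_add_zsmul_eq 4 0 hint
  have h2 : ∫ θ in (π / 4)..(π / 2), F θ = ∫ θ in (0:ℝ)..(π / 4), F θ := by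
    have := intervalIntegral.integral_comp_sub_left (a := 0) (b := π / 4) F (π / 2)
    simp_rw [hsymm] at this
    rw [this, sub_zero, show π / 2 - π / 4 = π / 4 by ring]
  have h3 : ∫ θ in (0:ℝ)..(π / 4), F θ = ∫ θ in (0:ℝ)..(π / 4), g θ :=
    intervalIntegral.integral_congr_uIoo (by rwa [hI])
  rw [zero_add, zero_add, ← intervalIntegral.integral_add_adjacent_intervals hint1 hint2, h2, h3]
    at h4
  rw [show 2 * π = (4 : ℤ) • (π / 2) by simp; ring, h4]
  simp
  ring

lemma continuousOn_cos_sin_kernel : ContinuousOn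
    (fun θ => cos θ / 6 + sin θ ^ 2 / (12 * cos θ) - sin θ ^ 3 / (60 * cos θ ^ 2))
    (Set.Icc 0 (π / 4)) := by
  have hc (θ : ℝ) (hθ : θ ∈ Set.Icc 0 (π / 4)) : cos θ ≠ 0 :=
    (cos_pos_of_mem_Ioo ⟨by linarith [hθ.1, pi_pos], by linarith [hθ.2, pi_pos]⟩).ne'
  refine ((by fun_prop : Continuous fun θ => cos θ / 6).continuousOn.add
    (ContinuousOn.div (by fun_prop) (by fun_prop) fun θ hθ => ?_)).sub
    (ContinuousOn.div (by fun_prop) (by fun_prop) fun θ hθ => ?_)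
  · simpa using hc θ hθ
  · simpa using hc θ hθ

lemma integral_cos_sin_kernel :
    ∫ θ in (0:ℝ)..(π / 4), (cos θ / 6 + sin θ ^ 2 / (12 * cos θ) - sin θ ^ 3 / (60 * cos θ ^ 2)) =
      √2 / 60 + log (1 + √2) / 12 + 1 / 30 := by
  have hpi := pi_pos
  have hd : ∀ θ ∈ Set.uIcc 0 (π / 4), HasDerivAt
      (fun θ => sin θ / 12 + (log (1 + sin θ) - log (cos θ)) / 12 - (cos θ)⁻¹ / 60 - cos θ / 60)
      (cos θ / 6 + sin θ ^ 2 / (12 * cos θ) - sin θ ^ 3 / (60 * cos θ ^ 2)) θ := by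
    intro θ hθ
    rw [Set.uIcc_of_le (by positivity)] at hθ
    have hc : 0 < cos θ :=
      cos_pos_of_mem_Ioo ⟨by linarith [hθ.1], by linarith [hθ.2]⟩
    have hs : 0 < 1 + sin θ := by
      linarith [sin_nonneg_of_mem_Icc ⟨hθ.1, by linarith [hθ.2]⟩]
    have hsin := hasDerivAt_sin θ
    have hcos := hasDerivAt_cos θ
    refine (((hsin.div_const 12).add (((hsin.const_add 1).log hs.ne').sub
      (hcos.log hc.ne') |>.div_const 12)).sub ((hcos.inv hc.ne').div_const 60) |>.sub
        (hcos.div_const 60)).congr_deriv ?_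
    have h2 := sin_sq_add_cos_sq θ
    have h3 : cos θ ^ 2 = 1 - sin θ ^ 2 := by linarith
    field_simp
    rw [h3]
    ring
  rw [intervalIntegral.integral_eq_sub_of_hasDerivAt hd
    (continuousOn_cos_sin_kernel.intervalIntegrable_of_Icc (by positivity))]
  have h2 : √2 ^ 2 = 2 := sq_sqrt (by norm_num)
  have hlog : log (1 + √2 / 2) - log (√2 / 2) = log (1 + √2) := by
    rw [← log_div (by positivity) (by positivity)]
    congr 1
    rw [div_eq_iff (by positivity)]
    linarith
  have hinv : (√2 / 2)⁻¹ = √2 := inv_eq_of_mul_eq_one_right (by linarith)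
  simp only [sin_pi_div_four, cos_pi_div_four, sin_zero, cos_zero, add_zero, log_one, hlog, hinv]
  ring

theorem Ainf_variance :
    (1/(2*π*Real.sqrt 2)) *
        (∫ θ in (0:ℝ)..(2*π), ∫ r in (-(1/Real.sqrt 2))..(1/Real.sqrt 2), (Ainf r θ)^2)
      - ((1/(2*π*Real.sqrt 2)) *
        ∫ θ in (0:ℝ)..(2*π), ∫ r in (-(1/Real.sqrt 2))..(1/Real.sqrt 2), Ainf r θ)^2
      = 1/4 - (1/(2*π*Real.sqrt 2)) *
          (4/15 + 2 * Real.log (1 + Real.sqrt 2) / 3 + 2 * Real.sqrt 2 / 15) := by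
  have hpi := pi_pos
  have h2 : √2 ^ 2 = 2 := sq_sqrt (by norm_num)
  have hA : ∀ θ ∈ Set.Ioo 0 (π / 4), ∀ r, Ainf r θ = sliceArea (cos θ) (sin θ) r := by
    intro θ hθ r
    rw [Ainf_eq_squareCut, volume_squareCut]
    exact cos_pos_of_mem_Ioo ⟨by linarith [hθ.1], by linarith [hθ.2]⟩
  have hfst : ∫ θ in (0:ℝ)..(2*π), ∫ r in (-(1/√2))..(1/√2), Ainf r θ =
      8 * ∫ θ in (0:ℝ)..(π / 4), 1 / √2 := by
    refine integral_eq_of_symm_of_eqOn (fun θ => by simp_rw [Ainf_add_pi_div_two])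
      (fun θ => by simp_rw [Ainf_pi_div_two_sub]) continuousOn_const fun θ hθ => ?_
    simp_rw [hA θ hθ]
    exact integral_sliceArea _ _ _
  have hsnd : ∫ θ in (0:ℝ)..(2*π), ∫ r in (-(1/√2))..(1/√2), (Ainf r θ)^2 =
      8 * ∫ θ in (0:ℝ)..(π / 4), (1 / √2 -
        (cos θ / 6 + sin θ ^ 2 / (12 * cos θ) - sin θ ^ 3 / (60 * cos θ ^ 2))) := by
    refine integral_eq_of_symm_of_eqOn (fun θ => by simp_rw [Ainf_add_pi_div_two])
      (fun θ => by simp_rw [Ainf_pi_div_two_sub])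
      (continuousOn_const.sub continuousOn_cos_sin_kernel) fun θ hθ => ?_
    simp_rw [hA θ hθ]
    refine integral_sliceArea_sq (sin_pos_of_pos_of_lt_pi hθ.1 (by linarith [hθ.2])) ?_ ?_
    · rw [← cos_pi_div_two_sub]
      exact cos_le_cos_of_nonneg_of_le_pi hθ.1.le (by linarith [hθ.1]) (by linarith [hθ.2])
    · rw [show 1 / √2 = √2 / 2 by field_simp; linarith]
      have : cos θ + sin θ ≤ √2 := le_sqrt_of_sq_le
        (by nlinarith [sin_sq_add_cos_sq θ, sq_nonneg (cos θ - sin θ)])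
      linarith
  rw [hfst, hsnd, intervalIntegral.integral_sub (by simp)
      (continuousOn_cos_sin_kernel.intervalIntegrable_of_Icc (by positivity)),
    integral_cos_sin_kernel, intervalIntegral.integral_const, smul_eq_mul]
  have h4 : √2 ^ 4 = 4 := by rw [show √2 ^ 4 = (√2 ^ 2) ^ 2 by ring, h2]; norm_num
  field_simp
  ring_nf
  simp only [h2, h4]
  ring
end

section
/- For any Schwartz function F supported on the positive reals, any integer ℓ, and X > 0, one has Σ_{n≥1} τ_{4ℓ}(n) F(n/X) = δ_{ℓ=0} · πX ∫_0^∞ F(r) dr + πX Σ_{n≥1} τ_{4ℓ}(n) B_{4ℓ}(F)(nX), where B_l(F)(ξ) = ∫_0^∞ F(y) J_l(2π√(ξy)) dy and J_l is the Bessel function of the first kind. -/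
open Real MeasureTheory

/-- A lattice point viewed as a complex number. -/
noncomputable def latC (p : ℤ × ℤ) : ℂ := (p.1 : ℝ) + (p.2 : ℝ) * Complex.I

/-- `τ_l(n) = Σ_{λ ∈ ℤ², ‖λ‖² = n} e^{i l θ_λ}`. -/
noncomputable def tau (l : ℤ) (n : ℕ) : ℂ :=
  ∑' p : {q : ℤ × ℤ // q.1^2 + q.2^2 = (n : ℤ)},
    Complex.exp ((l : ℂ) * (Complex.arg (latC p.1) : ℂ) * Complex.I)

/-- Bessel function of the first kind of nonnegative integer order, via its power series. -/
noncomputable def besselJNat (n : ℕ) (x : ℝ) : ℝ :=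
  ∑' m : ℕ, (-1 : ℝ)^m / (m.factorial * (m + n).factorial) * (x/2)^(2*m + n)

/-- Bessel function of the first kind of integer order, with `J_{-n} = (-1)^n J_n`. -/
noncomputable def besselJ (l : ℤ) (x : ℝ) : ℝ :=
  if 0 ≤ l then besselJNat l.toNat x else (-1 : ℝ)^((-l).toNat) * besselJNat (-l).toNat x

/-- The Hankel-type transform `B_l(F)(ξ) = ∫_0^∞ F(y) J_l(2π√(ξy)) dy`. -/
noncomputable def hankelB (l : ℤ) (F : ℝ → ℂ) (ξ : ℝ) : ℂ :=
  ∫ y in Set.Ioi (0:ℝ), F y * (besselJ l (2*π*Real.sqrt (ξ*y)) : ℂ)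

open scoped SchwartzMap FourierTransform LineDeriv

lemma SchwartzMap.deriv_eq_zero_of_nonpos {F : 𝓢(ℝ, ℂ)} (hF : ∀ x ≤ 0, F x = 0) :
    ∀ x ≤ 0, SchwartzMap.derivCLM ℂ ℂ F x = 0 := by
  have hc : IsClosed {x : ℝ | SchwartzMap.derivCLM ℂ ℂ F x = 0} :=
    isClosed_eq (SchwartzMap.continuous _) continuous_const
  have hsub : Set.Iio (0 : ℝ) ⊆ {x : ℝ | SchwartzMap.derivCLM ℂ ℂ F x = 0} := by
    intro x hx
    have h : F =ᶠ[nhds x] fun _ => (0 : ℂ) := by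
      filter_upwards [Iio_mem_nhds hx] with y hy using hF y (le_of_lt hy)
    simp [SchwartzMap.derivCLM_apply, h.deriv_eq]
  intro x hx
  have := hc.closure_subset_iff.2 hsub
  rw [closure_Iio] at this
  exact this hx

/-- A Schwartz function vanishing on the nonpositive reals vanishes to infinite order at `0`. -/
lemma SchwartzMap.exists_norm_le_pow (k : ℕ) (F : 𝓢(ℝ, ℂ)) (hF : ∀ x ≤ 0, F x = 0) :
    ∃ C, 0 ≤ C ∧ ∀ x, ‖F x‖ ≤ C * |x| ^ k := by
  induction k generalizing F with
  | zero =>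
    exact ⟨_, apply_nonneg (SchwartzMap.seminorm ℝ 0 0) F,
      fun x => by simpa using F.norm_le_seminorm ℝ x⟩
  | succ k ih =>
    obtain ⟨C, hC0, hC⟩ := ih _ (SchwartzMap.deriv_eq_zero_of_nonpos hF)
    refine ⟨C, hC0, fun x => ?_⟩
    rcases le_or_gt x 0 with hx | hx
    · rw [hF x hx, norm_zero]; positivity
    have h := (convex_Icc 0 x).norm_image_sub_le_of_norm_deriv_le (f := F) (C := C * |x| ^ k)
      (fun y _ => F.differentiableAt) (fun y hy => ?_) (Set.left_mem_Icc.2 hx.le)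
      (Set.right_mem_Icc.2 hx.le)
    · rw [hF 0 le_rfl, sub_zero, sub_zero, Real.norm_eq_abs, mul_assoc, ← pow_succ] at h
      exact h
    · rw [← SchwartzMap.derivCLM_apply ℂ]
      refine (hC y).trans ?_
      rw [abs_of_nonneg hy.1, abs_of_pos hx]
      gcongr
      exacts [hy.1, hy.2]

lemma SchwartzMap.hasDerivAt_div_pow {F : 𝓢(ℝ, ℂ)} (hF : ∀ x ≤ 0, F x = 0) (k : ℕ) (x : ℝ) :
    HasDerivAt (fun x : ℝ => F x / (x : ℂ) ^ k)
      (SchwartzMap.derivCLM ℂ ℂ F x / (x : ℂ) ^ k - k * (F x / (x : ℂ) ^ (k + 1))) x := by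
  by_cases hx : x = 0
  · subst hx
    rw [hF 0 le_rfl, SchwartzMap.deriv_eq_zero_of_nonpos hF 0 le_rfl]
    obtain ⟨C, hC0, hC⟩ := F.exists_norm_le_pow (k + 2) hF
    have hO : (fun x : ℝ => F x / (x : ℂ) ^ k) =O[nhds 0] fun x => ‖x - 0‖ ^ 2 := by
      refine Asymptotics.IsBigO.of_bound C (Filter.Eventually.of_forall fun x => ?_)
      by_cases hx : x = 0
      · simp [hx, hF 0 le_rfl]
      have hx' : 0 < |x| ^ k := by positivity
      simp only [norm_div, norm_pow, Complex.norm_real, Real.norm_eq_abs, sub_zero, abs_abs]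
      rw [div_le_iff₀ hx', mul_assoc, ← pow_add, add_comm 2 k]
      exact hC x
    have := (hO.hasFDerivAt (𝕜 := ℝ) one_lt_two).hasDerivAt
    simpa using this
  · have hx' : (x : ℂ) ≠ 0 := by exact_mod_cast hx
    have h1 : HasDerivAt F (SchwartzMap.derivCLM ℂ ℂ F x) x := by
      rw [SchwartzMap.derivCLM_apply]; exact F.differentiableAt.hasDerivAt
    have h2 : HasDerivAt (fun x : ℝ => (x : ℂ) ^ k) (k * (x : ℂ) ^ (k - 1)) x := by
      simpa using ((hasDerivAt_id x).ofReal_comp.fun_pow k)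
    convert! h1.fun_div h2 (pow_ne_zero k hx') using 1
    rcases k with _ | k
    · simp
    · simp only [Nat.add_sub_cancel]; push_cast; field_simp; ring

lemma SchwartzMap.contDiff_div_pow (n : ℕ) {F : 𝓢(ℝ, ℂ)} (hF : ∀ x ≤ 0, F x = 0) (k : ℕ) :
    ContDiff ℝ n (fun x : ℝ => F x / (x : ℂ) ^ k) := by
  induction n generalizing F k with
  | zero =>
    exact contDiff_zero.2 (continuous_iff_continuousAt.2
      fun x => (SchwartzMap.hasDerivAt_div_pow hF k x).continuousAt)
  | succ n ih =>
    push_cast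
    refine contDiff_succ_iff_deriv.2 ⟨fun x =>
      (SchwartzMap.hasDerivAt_div_pow hF k x).differentiableAt, by simp, ?_⟩
    rw [funext fun x => (SchwartzMap.hasDerivAt_div_pow hF k x).deriv]
    exact (ih (SchwartzMap.deriv_eq_zero_of_nonpos hF) k).sub (contDiff_const.mul (ih hF (k + 1)))

lemma SchwartzMap.decay_div_pow (p n : ℕ) {F : 𝓢(ℝ, ℂ)} (hF : ∀ x ≤ 0, F x = 0) (k : ℕ) :
    ∃ C, ∀ x, ‖x‖ ^ p * ‖iteratedDeriv n (fun x : ℝ => F x / (x : ℂ) ^ k) x‖ ≤ C := by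
  induction n generalizing F k with
  | zero =>
    obtain ⟨C, hC0, hC⟩ := F.exists_norm_le_pow k hF
    set D := SchwartzMap.seminorm ℝ p 0 F
    refine ⟨C + D, fun x => ?_⟩
    have hD' : ‖x‖ ^ p * ‖F x‖ ≤ D := F.norm_pow_mul_le_seminorm ℝ p x
    have hD0 : 0 ≤ D := le_trans (by positivity) hD'
    rw [iteratedDeriv_zero, norm_div, norm_pow, Complex.norm_real, Real.norm_eq_abs]
    rw [Real.norm_eq_abs] at hD'
    by_cases hx : x = 0
    · simp only [hx, hF 0 le_rfl, norm_zero, zero_div, mul_zero]; positivity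
    have hx' : 0 < |x| := abs_pos.2 hx
    rcases le_total |x| 1 with h | h
    · have h1 : ‖F x‖ / |x| ^ k ≤ C := by
        rw [div_le_iff₀ (by positivity)]; exact hC x
      calc |x| ^ p * (‖F x‖ / |x| ^ k) ≤ 1 * C := by
            gcongr; exact pow_le_one₀ hx'.le h
        _ ≤ C + D := by linarith
    · have h1 : ‖F x‖ / |x| ^ k ≤ ‖F x‖ := div_le_self (norm_nonneg _) (one_le_pow₀ h)
      calc |x| ^ p * (‖F x‖ / |x| ^ k) ≤ |x| ^ p * ‖F x‖ := by gcongr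
        _ ≤ C + D := by linarith
  | succ n ih =>
    obtain ⟨C, hC⟩ := ih (SchwartzMap.deriv_eq_zero_of_nonpos hF) k
    obtain ⟨D, hD⟩ := ih hF (k + 1)
    refine ⟨C + k * D, fun x => ?_⟩
    rw [iteratedDeriv_succ', funext fun x => (SchwartzMap.hasDerivAt_div_pow hF k x).deriv]
    have h1 := (SchwartzMap.contDiff_div_pow n (SchwartzMap.deriv_eq_zero_of_nonpos hF) k)
    have h2 := SchwartzMap.contDiff_div_pow n hF (k + 1)
    rw [iteratedDeriv_fun_sub h1.contDiffAt (contDiff_const.mul h2).contDiffAt,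
      iteratedDeriv_const_mul_field]
    calc _ ≤ ‖x‖ ^ p * (_ + _) := by gcongr; exact norm_sub_le _ _
      _ ≤ _ := by
        rw [mul_add, norm_mul, Complex.norm_natCast, mul_left_comm]
        gcongr
        exacts [hC x, hD x]

/-- Division by `x ^ k` of a Schwartz function vanishing on the nonpositive reals. -/
noncomputable def SchwartzMap.divPow (F : 𝓢(ℝ, ℂ)) (hF : ∀ x ≤ 0, F x = 0) (k : ℕ) : 𝓢(ℝ, ℂ) where
  toFun x := F x / (x : ℂ) ^ k
  smooth' := contDiff_infty.2 fun n => SchwartzMap.contDiff_div_pow n hF k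
  decay' p n := by
    simpa only [norm_iteratedFDeriv_eq_norm_iteratedDeriv] using
      SchwartzMap.decay_div_pow p n hF k

lemma Complex.hasTemperateGrowth_normSq_div (X : ℝ) :
    (fun z : ℂ => ‖z‖ ^ 2 / X).HasTemperateGrowth := by
  have h : (fun z : ℂ => ‖z‖ ^ 2 / X) =
      (fun z : ℂ => X⁻¹) * ((Complex.reCLM : ℂ → ℝ) ^ 2 + (Complex.imCLM : ℂ → ℝ) ^ 2) := by
    ext z
    simp only [Pi.mul_apply, Pi.add_apply, Pi.pow_apply, Complex.reCLM_apply, Complex.imCLM_apply,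
      Complex.sq_norm, Complex.normSq_apply]
    ring
  rw [h]
  exact (Function.HasTemperateGrowth.const _).mul
    ((Complex.reCLM.hasTemperateGrowth.pow 2).add (Complex.imCLM.hasTemperateGrowth.pow 2))

lemma Complex.norm_pow_mul_exp_arg (z : ℂ) (k : ℕ) :
    (‖z‖ : ℂ) ^ k * Complex.exp ((k : ℂ) * Complex.arg z * Complex.I) = z ^ k := by
  conv_rhs => rw [← Complex.norm_mul_exp_arg_mul_I z]
  rw [mul_pow, ← Complex.exp_nat_mul, mul_assoc (k : ℂ)]

/-- A radial profile that is flat at the origin times an angular character of degree `4 * l`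
is a Schwartz function on the plane. -/
lemma exists_schwartzMap_radial_mul_exp_arg (F : 𝓢(ℝ, ℂ)) (hF : ∀ x ≤ 0, F x = 0) (l : ℤ)
    {X : ℝ} (hX : 0 < X) :
    ∃ f : 𝓢(ℂ, ℂ), ∀ z, f z =
      F (‖z‖ ^ 2 / X) * Complex.exp (((4 * l : ℤ) : ℂ) * (Complex.arg z : ℂ) * Complex.I) := by
  have hup : ∃ (k : ℕ) (C : ℝ), ∀ z : ℂ, ‖z‖ ≤ C * (1 + ‖‖z‖ ^ 2 / X‖) ^ k := by
    refine ⟨1, 1 + X, fun z => ?_⟩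
    have h0 : 0 ≤ ‖z‖ ^ 2 / X := by positivity
    rw [Real.norm_eq_abs, abs_of_nonneg h0, pow_one]
    have h1 : ‖z‖ ≤ 1 + ‖z‖ ^ 2 := by nlinarith [sq_nonneg (‖z‖ - 1)]
    have h2 : ‖z‖ ^ 2 = X * (‖z‖ ^ 2 / X) := by field_simp
    nlinarith
  obtain ⟨k, hk⟩ : ∃ k : ℕ, k = l.natAbs := ⟨_, rfl⟩
  let G : 𝓢(ℂ, ℂ) := SchwartzMap.compCLM ℂ (Complex.hasTemperateGrowth_normSq_div X) hup
    (F.divPow hF (2 * k))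
  have hG : ∀ z, G z = F (‖z‖ ^ 2 / X) / ((‖z‖ ^ 2 / X : ℝ) : ℂ) ^ (2 * k) := fun z => rfl
  have hX' : (X : ℂ) ≠ 0 := by exact_mod_cast hX.ne'
  have key : ∀ u : ℂ → ℂ, u.HasTemperateGrowth → (∀ z, u z = (‖z‖ : ℂ) ^ (4 * k) *
      Complex.exp (((4 * l : ℤ) : ℂ) * (Complex.arg z : ℂ) * Complex.I)) →
      ∃ f : 𝓢(ℂ, ℂ), ∀ z, f z =
      F (‖z‖ ^ 2 / X) * Complex.exp (((4 * l : ℤ) : ℂ) * (Complex.arg z : ℂ) * Complex.I) := by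
    intro u hu huz
    refine ⟨((X : ℂ) ^ (2 * k))⁻¹ • SchwartzMap.smulLeftCLM ℂ u G, fun z => ?_⟩
    rw [smul_apply, SchwartzMap.smulLeftCLM_apply_apply hu, hG, huz]
    by_cases hz : z = 0
    · simp [hz, hF 0 le_rfl]
    have hz' : (‖z‖ : ℂ) ≠ 0 := by simpa using hz
    simp only [smul_eq_mul]
    push_cast
    rw [div_pow, ← pow_mul, show 2 * (2 * k) = 4 * k by ring]
    field_simp
  rcases le_total 0 l with hl | hl
  · refine key (id ^ (4 * k)) (Function.HasTemperateGrowth.id.pow _) fun z => ?_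
    rw [Pi.pow_apply, id, ← Complex.norm_pow_mul_exp_arg]
    have : ((4 * l : ℤ) : ℂ) = ((4 * k : ℕ) : ℂ) := by
      have : 4 * l = ((4 * k : ℕ) : ℤ) := by omega
      rw [this]; rfl
    rw [this]
  · refine key ((Complex.conjCLE : ℂ → ℂ) ^ (4 * k))
      (Complex.conjCLE.hasTemperateGrowth.pow _) fun z => ?_
    rw [Pi.pow_apply, Complex.conjCLE_apply, ← map_pow, ← Complex.norm_pow_mul_exp_arg, map_mul,
      ← Complex.exp_conj]
    have : ((4 * l : ℤ) : ℂ) = -((4 * k : ℕ) : ℂ) := by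
      have : 4 * l = -((4 * k : ℕ) : ℤ) := by omega
      rw [this, Int.cast_neg]; rfl
    rw [this]
    simp [Complex.conj_ofNat]

lemma SchwartzMap.exists_norm_le_inv_mul_inv (f : 𝓢(ℂ, ℂ)) :
    ∃ C, 0 ≤ C ∧ ∀ x y : ℝ, ‖f (x + y * Complex.I)‖ ≤ C * ((1 + x ^ 2)⁻¹ * (1 + y ^ 2)⁻¹) := by
  refine ⟨SchwartzMap.seminorm ℝ 0 0 f + 2 * SchwartzMap.seminorm ℝ 2 0 f +
    SchwartzMap.seminorm ℝ 4 0 f, by positivity, fun x y => ?_⟩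
  set z : ℂ := x + y * Complex.I
  have hz : ‖z‖ ^ 2 = x ^ 2 + y ^ 2 := by
    rw [Complex.sq_norm, Complex.normSq_add_mul_I]
  have h0 := f.norm_pow_mul_le_seminorm ℝ 0 z
  have h2 := f.norm_pow_mul_le_seminorm ℝ 2 z
  have h4 := f.norm_pow_mul_le_seminorm ℝ 4 z
  rw [show ‖z‖ ^ 4 = (‖z‖ ^ 2) ^ 2 by ring] at h4
  rw [hz] at h2 h4
  rw [pow_zero, one_mul] at h0
  rw [← mul_inv, ← div_eq_mul_inv, le_div_iff₀ (by positivity)]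
  have hn := norm_nonneg (f z)
  nlinarith [mul_nonneg hn (sq_nonneg (x * y)), mul_nonneg hn (sq_nonneg x),
    mul_nonneg hn (sq_nonneg y), mul_nonneg hn (sq_nonneg (x ^ 2)),
    mul_nonneg hn (sq_nonneg (y ^ 2))]

lemma summable_inv_one_add_int_sq : Summable fun n : ℤ => (1 + (n : ℝ) ^ 2)⁻¹ := by
  refine Summable.of_norm_bounded_eventually
    (Real.summable_one_div_int_pow.2 one_lt_two) ?_
  filter_upwards [Filter.eventually_cofinite_ne (0 : ℤ)] with n hn
  have : (0 : ℝ) < (n : ℝ) ^ 2 := by positivity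
  rw [Real.norm_of_nonneg (by positivity), one_div]
  gcongr
  linarith

lemma summable_inv_mul_inv (C : ℝ) : Summable fun p : ℤ × ℤ =>
    C * ((1 + (p.1 : ℝ) ^ 2)⁻¹ * (1 + (p.2 : ℝ) ^ 2)⁻¹) :=
  (summable_inv_one_add_int_sq.mul_of_nonneg summable_inv_one_add_int_sq
    (fun _ => by positivity) (fun _ => by positivity)).mul_left C

lemma SchwartzMap.summable_latC (f : 𝓢(ℂ, ℂ)) : Summable fun p : ℤ × ℤ => f (latC p) := by
  obtain ⟨C, -, hC⟩ := f.exists_norm_le_inv_mul_inv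
  exact Summable.of_norm_bounded (summable_inv_mul_inv C) fun p => hC p.1 p.2

/-- The restriction of a Schwartz function on the plane to a vertical line. -/
noncomputable def SchwartzMap.slice (f : 𝓢(ℂ, ℂ)) (x : ℝ) : 𝓢(ℝ, ℂ) :=
  SchwartzMap.compCLMOfAntilipschitz ℂ (K := 1) (g := fun y : ℝ => (x : ℂ) + y * Complex.I)
    ((Function.HasTemperateGrowth.const _).add
      (Function.HasTemperateGrowth.mul Complex.ofRealCLM.hasTemperateGrowth
        (Function.HasTemperateGrowth.const _)))
    (AntilipschitzWith.of_le_mul_dist fun a b => by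
      simp [dist_eq_norm, ← sub_mul, ← Complex.ofReal_sub]) f

lemma SchwartzMap.slice_apply (f : 𝓢(ℂ, ℂ)) (x y : ℝ) :
    f.slice x y = f (x + y * Complex.I) := rfl

lemma SchwartzMap.derivCLM_slice (f : 𝓢(ℂ, ℂ)) (x : ℝ) :
    SchwartzMap.derivCLM ℂ ℂ (f.slice x) = (∂_{Complex.I} f).slice x := by
  ext y
  rw [SchwartzMap.derivCLM_apply, SchwartzMap.slice_apply, SchwartzMap.lineDerivOp_apply_eq_fderiv]
  have h1 : HasDerivAt (fun y : ℝ => (x : ℂ) + y * Complex.I) Complex.I y := by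
    simpa using (((hasDerivAt_id y).ofReal_comp).mul_const Complex.I).const_add (x : ℂ)
  exact (f.differentiableAt.hasFDerivAt.comp_hasDerivAt y h1).deriv

lemma SchwartzMap.exists_norm_fourier_slice_le (f : 𝓢(ℂ, ℂ)) :
    ∃ C, 0 ≤ C ∧ ∀ x b : ℝ, ‖𝓕 (f.slice x) b‖ ≤ C * (1 + x ^ 2)⁻¹ := by
  obtain ⟨C, hC0, hC⟩ := f.exists_norm_le_inv_mul_inv
  refine ⟨C * π, by positivity, fun x b => ?_⟩
  rw [SchwartzMap.fourier_coe, Real.fourier_eq]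
  refine (norm_integral_le_integral_norm _).trans ?_
  calc _ ≤ ∫ y : ℝ, C * (1 + x ^ 2)⁻¹ * (1 + y ^ 2)⁻¹ := by
        refine integral_mono_of_nonneg (Filter.Eventually.of_forall fun _ => norm_nonneg _)
          (integrable_inv_one_add_sq.const_mul _) (Filter.Eventually.of_forall fun y => ?_)
        simpa [Circle.norm_smul, mul_assoc, SchwartzMap.slice_apply] using hC x y
    _ = C * π * (1 + x ^ 2)⁻¹ := by
        rw [integral_const_mul, integral_univ_inv_one_add_sq]; ring

lemma SchwartzMap.exists_norm_fourier_slice_le_inv_mul_inv (f : 𝓢(ℂ, ℂ)) :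
    ∃ C, 0 ≤ C ∧ ∀ x b : ℝ, ‖𝓕 (f.slice x) b‖ ≤ C * ((1 + x ^ 2)⁻¹ * (1 + b ^ 2)⁻¹) := by
  obtain ⟨C, hC0, hC⟩ := f.exists_norm_fourier_slice_le
  obtain ⟨D, hD0, hD⟩ := (∂_{Complex.I} (∂_{Complex.I} f)).exists_norm_fourier_slice_le
  refine ⟨C + D, by positivity, fun x b => ?_⟩
  have hder : ∀ (g : 𝓢(ℝ, ℂ)) (b : ℝ),
      ‖𝓕 (SchwartzMap.derivCLM ℂ ℂ g) b‖ = 2 * π * |b| * ‖𝓕 g b‖ := by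
    intro g b
    have := congrFun (Real.fourier_deriv g.integrable g.differentiable
      ((SchwartzMap.derivCLM ℂ ℂ g).integrable (μ := volume))) b
    rw [SchwartzMap.fourier_coe, SchwartzMap.fourier_coe]
    change ‖𝓕 (deriv g) b‖ = _
    rw [this]
    simp [abs_of_pos Real.pi_pos]
  have h1 := hD x b
  rw [← SchwartzMap.derivCLM_slice, ← SchwartzMap.derivCLM_slice, hder, hder] at h1
  have h2 := hC x b
  rw [← mul_assoc, ← div_eq_mul_inv, le_div_iff₀ (by positivity)]
  have hn := norm_nonneg (𝓕 (f.slice x) b)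
  have h3 : 2 * π * |b| * (2 * π * |b| * ‖𝓕 (f.slice x) b‖) =
      (2 * π) ^ 2 * (b ^ 2 * ‖𝓕 (f.slice x) b‖) := by
    rw [← sq_abs b]; ring
  rw [h3] at h1
  have h4 : 1 ≤ (2 * π) ^ 2 := by nlinarith [Real.pi_gt_three]
  have h5 : 0 ≤ b ^ 2 * ‖𝓕 (f.slice x) b‖ := by positivity
  nlinarith

lemma SchwartzMap.continuous_fourier_slice (f : 𝓢(ℂ, ℂ)) (b : ℝ) :
    Continuous fun x : ℝ => 𝓕 (f.slice x) b := by
  obtain ⟨C, hC0, hC⟩ := f.exists_norm_le_inv_mul_inv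
  simp only [SchwartzMap.fourier_coe, Real.fourier_eq]
  refine continuous_of_dominated (bound := fun y => C * (1 + y ^ 2)⁻¹) (fun x => ?_) (fun x => ?_)
    (integrable_inv_one_add_sq.const_mul _) ?_
  · refine Continuous.aestronglyMeasurable ?_
    have := (f.slice x).continuous
    fun_prop
  · refine Filter.Eventually.of_forall fun y => ?_
    rw [Circle.norm_smul]
    refine (hC x y).trans ?_
    gcongr
    refine mul_le_of_le_one_left (by positivity) (inv_le_one_of_one_le₀ ?_)
    nlinarith [sq_nonneg x]
  · refine Filter.Eventually.of_forall fun y => ?_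
    simp only [SchwartzMap.slice_apply]
    have := f.continuous
    fun_prop

lemma SchwartzMap.fourier_fourier_slice (f : 𝓢(ℂ, ℂ)) (a b : ℝ) :
    𝓕 (fun x : ℝ => 𝓕 (f.slice x) b) a = 𝓕 f (a + b * Complex.I) := by
  rw [SchwartzMap.fourier_coe, Real.fourier_eq, Real.fourier_eq]
  simp only [SchwartzMap.fourier_coe, Real.fourier_eq]
  have hint : Integrable fun z : ℂ =>
      Real.fourierChar (-(inner ℝ z (a + b * Complex.I : ℂ))) • f z :=
    (Real.fourierIntegral_convergent_iff _).2 f.integrable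
  have hmp := Complex.volume_preserving_equiv_real_prod.symm
  rw [← hmp.integral_comp Complex.measurableEquivRealProd.symm.measurableEmbedding,
    Measure.volume_eq_prod, integral_prod]
  · refine integral_congr_ae (Filter.Eventually.of_forall fun x => ?_)
    dsimp only
    rw [Circle.smul_def, smul_eq_mul, ← integral_const_mul]
    refine integral_congr_ae (Filter.Eventually.of_forall fun y => ?_)
    dsimp only
    have hz : Complex.measurableEquivRealProd.symm (x, y) = (x : ℂ) + y * Complex.I := by
      apply Complex.ext <;> simp [Complex.measurableEquivRealProd]
    have hin : -inner ℝ ((x : ℂ) + y * Complex.I) ((a : ℂ) + b * Complex.I) =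
        -inner ℝ x a + -inner ℝ y b := by
      simp [Complex.inner]
      ring
    rw [hz, hin, AddChar.map_add_eq_mul, mul_smul, SchwartzMap.slice_apply]
    simp only [Circle.smul_def, smul_eq_mul]
  · exact (hmp.integrable_comp_emb
      Complex.measurableEquivRealProd.symm.measurableEmbedding).2 hint

lemma SchwartzMap.tsum_fourier_slice (f : 𝓢(ℂ, ℂ)) (b : ℝ) :
    ∑' n : ℤ, 𝓕 (f.slice n) b = ∑' n : ℤ, 𝓕 f (n + b * Complex.I) := by
  obtain ⟨C, hC0, hC⟩ := f.exists_norm_fourier_slice_le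
  have hO : (fun x : ℝ => 𝓕 (f.slice x) b) =O[Filter.cocompact ℝ] fun x => |x| ^ (-2 : ℝ) := by
    refine Asymptotics.IsBigO.of_bound C ?_
    filter_upwards [(Set.finite_singleton (0 : ℝ)).isCompact.compl_mem_cocompact] with x hx
    have hx' : x ≠ 0 := hx
    refine (hC x b).trans ?_
    have h2 : |x| ^ (-2 : ℝ) = (x ^ 2)⁻¹ := by
      rw [Real.rpow_neg (abs_nonneg x), Real.rpow_two, sq_abs]
    rw [h2, Real.norm_of_nonneg (by positivity)]
    gcongr
    linarith
  have hs : Summable fun n : ℤ => 𝓕 (fun x : ℝ => 𝓕 (f.slice x) b) (n : ℝ) := by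
    obtain ⟨D, hD0, hD⟩ := (𝓕 f).exists_norm_le_inv_mul_inv
    simp only [SchwartzMap.fourier_fourier_slice]
    refine Summable.of_norm_bounded
      ((summable_inv_one_add_int_sq.mul_right (1 + b ^ 2)⁻¹).mul_left D) fun n => hD n b
  have := Real.tsum_eq_tsum_fourier_of_rpow_decay_of_summable (f.continuous_fourier_slice b)
    one_lt_two hO hs 0
  simpa [SchwartzMap.fourier_fourier_slice] using this

/-- Poisson summation for Schwartz functions on the plane and the lattice of Gaussian integers. -/
theorem SchwartzMap.tsum_latC_eq_tsum_fourier (f : 𝓢(ℂ, ℂ)) :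
    ∑' p : ℤ × ℤ, f (latC p) = ∑' p : ℤ × ℤ, 𝓕 f (latC p) := by
  obtain ⟨C, hC0, hC⟩ := f.exists_norm_fourier_slice_le_inv_mul_inv
  have hs : Summable fun p : ℤ × ℤ => 𝓕 (f.slice p.1) p.2 :=
    Summable.of_norm_bounded (summable_inv_mul_inv C) fun p => hC p.1 p.2
  have hpois : ∀ a : ℤ, ∑' b : ℤ, f (latC (a, b)) = ∑' b : ℤ, 𝓕 (f.slice a) b := fun a => by
    simpa [SchwartzMap.slice_apply, latC] using (f.slice a).tsum_eq_tsum_fourier 0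
  have h1 := Summable.tsum_comm (f := fun a b : ℤ => 𝓕 (f.slice a) (b : ℝ)) hs
  have h2 := Summable.tsum_comm (f := fun a b : ℤ => 𝓕 f (latC (a, b))) (𝓕 f).summable_latC
  have h3 := SchwartzMap.summable_latC (𝓕 f)
  rw [f.summable_latC.tsum_prod, h3.tsum_prod, tsum_congr hpois, ← h1, ← h2]
  refine tsum_congr fun b => ?_
  simpa [latC] using f.tsum_fourier_slice b

lemma intervalIntegral_exp_int_mul_I (m : ℤ) :
    ∫ θ in -π..π, Complex.exp ((m : ℂ) * θ * Complex.I) = if m = 0 then ((2 * π : ℝ) : ℂ) else 0 := by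
  split_ifs with h
  · subst h
    simp only [Int.cast_zero, zero_mul, Complex.exp_zero, intervalIntegral.integral_const]
    rw [Complex.real_smul, mul_one]
    congr 1
    ring
  · have hm : (m : ℂ) * Complex.I ≠ 0 := by simp [h]
    have := integral_exp_mul_complex (a := -π) (b := π) hm
    simp only [mul_right_comm _ Complex.I] at this
    rw [this]
    have hper : Complex.exp ((m : ℂ) * (π : ℝ) * Complex.I) =
        Complex.exp ((m : ℂ) * ((-π : ℝ) : ℂ) * Complex.I) := by
      rw [Complex.exp_eq_exp_iff_exists_int]
      exact ⟨m, by push_cast; ring⟩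
    rw [hper, sub_self, zero_div]

lemma exp_mul_exp_eq_tsum (c θ : ℂ) (n : ℕ) :
    Complex.exp ((n : ℂ) * θ * Complex.I) * Complex.exp (2 * c * Complex.cos θ) =
      ∑' p : ℕ × ℕ, c ^ (p.1 + p.2) / (p.1.factorial * p.2.factorial) *
        Complex.exp (((n + p.1 - p.2 : ℤ) : ℂ) * θ * Complex.I) := by
  have hexp : Complex.exp (2 * c * Complex.cos θ) =
      Complex.exp (c * Complex.exp (θ * Complex.I)) *
        Complex.exp (c * Complex.exp (-θ * Complex.I)) := by
    rw [← Complex.exp_add, Complex.cos]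
    ring_nf
  have hseries (z : ℂ) : Complex.exp z = ∑' k : ℕ, z ^ k / k.factorial := by
    rw [Complex.exp_eq_exp_ℂ, NormedSpace.exp_eq_tsum_div]
  rw [hexp, hseries (c * Complex.exp (θ * Complex.I)), hseries (c * Complex.exp (-θ * Complex.I)),
    tsum_mul_tsum_of_summable_norm
      (NormedSpace.norm_expSeries_div_summable (c * Complex.exp (θ * Complex.I)))
      (NormedSpace.norm_expSeries_div_summable (c * Complex.exp (-θ * Complex.I))),
    ← tsum_mul_left]
  refine tsum_congr fun p => ?_
  have : Complex.exp (((n + p.1 - p.2 : ℤ) : ℂ) * θ * Complex.I) =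
      Complex.exp ((n : ℂ) * θ * Complex.I) * (Complex.exp (θ * Complex.I) ^ p.1 *
        Complex.exp (-θ * Complex.I) ^ p.2) := by
    rw [← Complex.exp_nat_mul, ← Complex.exp_nat_mul, ← Complex.exp_add, ← Complex.exp_add]
    congr 1
    push_cast
    ring
  rw [this, mul_pow, mul_pow, pow_add]
  ring

/-- Bessel's integral, from expanding the generating function. -/
lemma intervalIntegral_exp_mul_exp_cos (n : ℕ) (x : ℝ) :
    ∫ θ in -π..π, Complex.exp ((n : ℂ) * θ * Complex.I) *
        Complex.exp (-(x * Real.cos θ : ℝ) * Complex.I) =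
      2 * π * (-Complex.I) ^ n * besselJNat n x := by
  set c : ℂ := -Complex.I * (x / 2 : ℝ) with hc
  let T : ℕ × ℕ → ℝ → ℂ := fun p θ => c ^ (p.1 + p.2) / (p.1.factorial * p.2.factorial) *
        Complex.exp (((n + p.1 - p.2 : ℤ) : ℂ) * θ * Complex.I)
  have hpi : -π ≤ π := by linarith [Real.pi_pos]
  have hTnorm : ∀ p θ, ‖T p θ‖ =
      ‖c‖ ^ p.1 / p.1.factorial * (‖c‖ ^ p.2 / p.2.factorial) := by
    intro p θ
    have : (((n + p.1 - p.2 : ℤ) : ℂ) * θ * Complex.I) =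
        ((((n + p.1 - p.2 : ℤ) : ℝ) * θ : ℝ) : ℂ) * Complex.I := by push_cast; ring
    simp only [T]
    rw [this, norm_mul, Complex.norm_exp_ofReal_mul_I, norm_div, norm_mul, norm_pow,
      Complex.norm_natCast, Complex.norm_natCast, mul_one, pow_add]
    ring
  have hsum : HasSum (fun p => ∫ θ in Set.Ioc (-π) π, T p θ)
      (∫ θ in Set.Ioc (-π) π, ∑' p, T p θ) := by
    refine hasSum_integral_of_summable_integral_norm (fun p => ?_) ?_
    · refine Continuous.integrableOn_Ioc ?_
      simp only [T]
      fun_prop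
    · simp only [hTnorm, setIntegral_const]
      refine Summable.const_smul _ ?_
      exact (Real.summable_pow_div_factorial ‖c‖).mul_of_nonneg
        (Real.summable_pow_div_factorial ‖c‖) (fun _ => by positivity) (fun _ => by positivity)
  have hT : ∀ p, ∫ θ in Set.Ioc (-π) π, T p θ = if (n + p.1 - p.2 : ℤ) = 0 then
      c ^ (p.1 + p.2) / (p.1.factorial * p.2.factorial) * ((2 * π : ℝ) : ℂ) else 0 := by
    intro p
    rw [← intervalIntegral.integral_of_le hpi]
    simp only [T]
    rw [intervalIntegral.integral_const_mul, intervalIntegral_exp_int_mul_I, mul_ite, mul_zero]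
  have hinj : Function.Injective fun a : ℕ => (a, a + n) := fun a b h => (Prod.mk.inj h).1
  rw [← hinj.hasSum_iff] at hsum
  · rw [intervalIntegral.integral_of_le hpi]
    have hfun : ∀ θ : ℝ, Complex.exp ((n : ℂ) * θ * Complex.I) *
        Complex.exp (-(x * Real.cos θ : ℝ) * Complex.I) = ∑' p, T p θ := by
      intro θ
      rw [← exp_mul_exp_eq_tsum, hc]
      congr 2
      push_cast
      ring
    simp only [hfun]
    rw [← hsum.tsum_eq, besselJNat, Complex.ofReal_tsum, ← tsum_mul_left]
    refine tsum_congr fun m => ?_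
    rw [Function.comp_apply, hT, if_pos (by push_cast; ring), hc]
    have h1 : (-Complex.I) ^ (m + (m + n)) = (-1) ^ m * (-Complex.I) ^ n := by
      rw [← add_assoc, pow_add, ← two_mul, pow_mul, neg_sq, Complex.I_sq]
    rw [mul_pow, h1, show m + (m + n) = 2 * m + n by ring]
    push_cast
    ring
  · intro p hp
    rw [hT, if_neg]
    intro h
    exact hp ⟨p.1, Prod.ext rfl (by dsimp only; omega)⟩

lemma intervalIntegral_exp_four_mul_exp_cos (l : ℤ) (x : ℝ) :
    ∫ θ in -π..π, Complex.exp (((4 * l : ℤ) : ℂ) * θ * Complex.I) *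
        Complex.exp (-(x * Real.cos θ : ℝ) * Complex.I) = 2 * π * besselJ (4 * l) x := by
  have hI : ∀ k : ℕ, (-Complex.I) ^ (4 * k) = 1 := fun k => by
    rw [pow_mul, neg_pow, Complex.I_pow_four]; norm_num
  rcases le_total 0 l with hl | hl
  · obtain ⟨k, rfl⟩ := Int.eq_ofNat_of_zero_le hl
    have := intervalIntegral_exp_mul_exp_cos (4 * k) x
    rw [hI, mul_one] at this
    have hk : (4 * (k : ℤ)).toNat = 4 * k := by omega
    rw [besselJ, if_pos (by omega), hk, ← this]
    push_cast
    rfl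
  · obtain ⟨k, hk⟩ := Int.eq_ofNat_of_zero_le (neg_nonneg.2 hl)
    obtain rfl : l = -(k : ℤ) := by omega
    have := intervalIntegral_exp_mul_exp_cos (4 * k) x
    rw [hI, mul_one] at this
    have hJ : besselJ (4 * -(k : ℤ)) x = besselJNat (4 * k) x := by
      rcases Nat.eq_zero_or_pos k with rfl | hk0
      · simp [besselJ]
      · have hk : (-(4 * -(k : ℤ))).toNat = 4 * k := by omega
        rw [besselJ, if_neg (by omega), hk, pow_mul]
        norm_num
    have hneg := intervalIntegral.integral_comp_neg (a := -π) (b := π)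
      fun θ : ℝ => Complex.exp (((4 * k : ℕ) : ℂ) * θ * Complex.I) *
        Complex.exp (-(x * Real.cos θ : ℝ) * Complex.I)
    rw [neg_neg] at hneg
    rw [hJ, ← this, ← hneg]
    refine intervalIntegral.integral_congr fun θ _ => ?_
    simp only [Real.cos_neg]
    push_cast
    ring_nf

lemma intervalIntegral_exp_four_mul_exp_cos_sub (l : ℤ) (x φ : ℝ) :
    ∫ θ in -π..π, Complex.exp (((4 * l : ℤ) : ℂ) * θ * Complex.I) *
        Complex.exp (-(x * Real.cos (θ - φ) : ℝ) * Complex.I) =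
      Complex.exp (((4 * l : ℤ) : ℂ) * φ * Complex.I) * (2 * π * besselJ (4 * l) x) := by
  let h : ℝ → ℂ := fun θ => Complex.exp (((4 * l : ℤ) : ℂ) * θ * Complex.I) *
        Complex.exp (-(x * Real.cos θ : ℝ) * Complex.I)
  have hper : Function.Periodic h (2 * π) := by
    intro θ
    simp only [h, Real.cos_add_two_pi]
    congr 1
    rw [Complex.exp_eq_exp_iff_exists_int]
    exact ⟨4 * l, by push_cast; ring⟩
  have hshift : ∀ θ : ℝ, Complex.exp (((4 * l : ℤ) : ℂ) * θ * Complex.I) *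
        Complex.exp (-(x * Real.cos (θ - φ) : ℝ) * Complex.I) =
      Complex.exp (((4 * l : ℤ) : ℂ) * φ * Complex.I) * h (θ - φ) := by
    intro θ
    simp only [h]
    rw [← Complex.exp_add, ← Complex.exp_add, ← Complex.exp_add]
    congr 1
    push_cast
    ring
  simp only [hshift]
  rw [intervalIntegral.integral_const_mul, intervalIntegral.integral_comp_sub_right,
    ← intervalIntegral_exp_four_mul_exp_cos]
  have := hper.intervalIntegral_add_eq (-π - φ) (-π)
  rw [show -π - φ + 2 * π = π - φ by ring, show -π + 2 * π = π by ring] at this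
  rw [this]

lemma integral_Ioi_mul_besselJ (F : ℝ → ℂ) (l : ℤ) {X : ℝ} (hX : 0 < X) {ρ : ℝ} (hρ : 0 ≤ ρ) :
    ∫ r in Set.Ioi (0 : ℝ), (r : ℂ) * F (r ^ 2 / X) * besselJ l (2 * π * r * ρ) =
      (X / 2 : ℝ) * hankelB l F (ρ ^ 2 * X) := by
  let g : ℝ → ℂ := fun y => F y * besselJ l (2 * π * √(ρ ^ 2 * X * y))
  have h1 := integral_comp_mul_left_Ioi g 0 (inv_pos.2 hX)
  rw [mul_zero, inv_inv] at h1
  have h2 := integral_comp_rpow_Ioi_of_pos (g := fun y => g (X⁻¹ * y)) (p := 2) two_pos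
  rw [h1] at h2
  have h3 : ∫ r in Set.Ioi (0 : ℝ), (r : ℂ) * F (r ^ 2 / X) * besselJ l (2 * π * r * ρ) =
      ∫ r in Set.Ioi (0 : ℝ), (1 / 2 : ℂ) * ((2 * r ^ ((2 : ℝ) - 1)) • g (X⁻¹ * r ^ (2 : ℝ))) := by
    refine setIntegral_congr_fun measurableSet_Ioi fun r hr => ?_
    have hr' : (0 : ℝ) < r := hr
    have hs : √(ρ ^ 2 * X * (X⁻¹ * r ^ 2)) = r * ρ := by
      rw [← Real.sqrt_sq (mul_nonneg hr'.le hρ)]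
      congr 1
      field_simp
    have he : (2 : ℝ) - 1 = 1 := by norm_num
    simp only [g, Real.rpow_two, hs, he, Real.rpow_one]
    rw [Complex.real_smul, inv_mul_eq_div, ← mul_assoc (2 * π) r ρ]
    push_cast
    ring
  rw [h3, integral_const_mul, h2, hankelB, Complex.real_smul]
  push_cast
  ring

lemma SchwartzMap.integrableOn_mul_comp_sq_div (F : 𝓢(ℝ, ℂ)) {X : ℝ} (hX : 0 < X) :
    IntegrableOn (fun r : ℝ => (r : ℂ) * F (r ^ 2 / X)) (Set.Ioi 0) := by
  have h1 : IntegrableOn (fun y => F (X⁻¹ * y)) (Set.Ioi 0) := by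
    rw [integrableOn_Ioi_comp_mul_left_iff _ _ (inv_pos.2 hX)]
    exact F.integrable.integrableOn
  rw [← integrableOn_Ioi_comp_rpow_iff' _ two_ne_zero] at h1
  refine h1.congr_fun (fun r _ => ?_) measurableSet_Ioi
  have he : (2 : ℝ) - 1 = 1 := by norm_num
  simp only [Real.rpow_two, he, Real.rpow_one, Complex.real_smul, inv_mul_eq_div]

lemma Complex.inner_polar (r θ : ℝ) (ξ : ℂ) :
    inner ℝ ((r : ℂ) * (Real.cos θ + Real.sin θ * Complex.I)) ξ =
      r * ‖ξ‖ * Real.cos (θ - Complex.arg ξ) := by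
  rw [Real.cos_sub]
  have h1 := Complex.norm_mul_cos_arg ξ
  have h2 := Complex.norm_mul_sin_arg ξ
  have : r * ‖ξ‖ * (Real.cos θ * Real.cos (Complex.arg ξ) + Real.sin θ * Real.sin (Complex.arg ξ)) =
      r * (Real.cos θ * ξ.re + Real.sin θ * ξ.im) := by
    rw [← h1, ← h2]; ring
  rw [this]
  simp only [Complex.inner, map_mul, map_add, Complex.conj_ofReal, Complex.conj_I, Complex.mul_re,
    Complex.mul_im, Complex.add_re, Complex.add_im, Complex.ofReal_re, Complex.ofReal_im,
    Complex.neg_re, Complex.neg_im, Complex.I_re, Complex.I_im]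
  ring

/-- The Fourier transform of a radial profile times an angular character. -/
lemma fourier_radial_mul_exp_arg (F : 𝓢(ℝ, ℂ)) (l : ℤ) {X : ℝ} (hX : 0 < X) {f : ℂ → ℂ}
    (hf : ∀ z, f z =
      F (‖z‖ ^ 2 / X) * Complex.exp (((4 * l : ℤ) : ℂ) * (Complex.arg z : ℂ) * Complex.I))
    (ξ : ℂ) :
    𝓕 f ξ = ((π * X : ℝ) : ℂ) * hankelB (4 * l) F (‖ξ‖ ^ 2 * X) *
      Complex.exp (((4 * l : ℤ) : ℂ) * (Complex.arg ξ : ℂ) * Complex.I) := by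
  rw [Real.fourier_eq, ← Complex.integral_comp_polarCoord_symm, polarCoord_target]
  let K : ℝ × ℝ → ℂ := fun p => (p.1 : ℂ) * F (p.1 ^ 2 / X) *
    (Complex.exp (((4 * l : ℤ) : ℂ) * p.2 * Complex.I) *
      Complex.exp (-(2 * π * p.1 * ‖ξ‖ * Real.cos (p.2 - Complex.arg ξ) : ℝ) * Complex.I))
  have hK : ∫ p in Set.Ioi (0 : ℝ) ×ˢ Set.Ioo (-π) π, p.1 •
      (Real.fourierChar (-inner ℝ (Complex.polarCoord.symm p) ξ) •
        f (Complex.polarCoord.symm p)) = ∫ p in Set.Ioi (0 : ℝ) ×ˢ Set.Ioo (-π) π, K p := by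
    refine setIntegral_congr_fun (measurableSet_Ioi.prod measurableSet_Ioo) fun p hp => ?_
    have hr : 0 < p.1 := hp.1
    have hθ : p.2 ∈ Set.Ioc (-π) π := ⟨hp.2.1, hp.2.2.le⟩
    have harg : Complex.arg (Complex.polarCoord.symm p) = p.2 := by
      rw [Complex.polarCoord_symm_apply]
      exact_mod_cast Complex.arg_mul_cos_add_sin_mul_I hr hθ
    simp only [K]
    rw [hf, harg, Complex.norm_polarCoord_symm, abs_of_pos hr, Complex.polarCoord_symm_apply,
      Complex.inner_polar, Circle.smul_def, Real.fourierChar_apply, Complex.real_smul, smul_eq_mul,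
      show 2 * π * -(p.1 * ‖ξ‖ * Real.cos (p.2 - Complex.arg ξ)) =
        -(2 * π * p.1 * ‖ξ‖ * Real.cos (p.2 - Complex.arg ξ)) by ring, Complex.ofReal_neg]
    ring
  have hKint : IntegrableOn K (Set.Ioi (0 : ℝ) ×ˢ Set.Ioo (-π) π) (volume.prod volume) := by
    rw [IntegrableOn, ← Measure.prod_restrict]
    have hone : Integrable (fun _ : ℝ => (1 : ℂ)) (volume.restrict (Set.Ioo (-π) π)) :=
      integrableOn_const (by simp)
    refine ((F.integrableOn_mul_comp_sq_div hX).mul_prod hone).mono ?_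
      (Filter.Eventually.of_forall fun p => ?_)
    · refine Continuous.aestronglyMeasurable ?_
      have := F.continuous
      simp only [K]
      fun_prop
    · have h1 : ((4 * l : ℤ) : ℂ) * p.2 * Complex.I =
          (((4 * l : ℤ) : ℝ) * p.2 : ℝ) * Complex.I := by push_cast; ring
      simp only [K]
      rw [h1, ← Complex.ofReal_neg, norm_mul, norm_mul (Complex.exp _),
        Complex.norm_exp_ofReal_mul_I, Complex.norm_exp_ofReal_mul_I]
      simp
  rw [hK, Measure.volume_eq_prod, setIntegral_prod _ hKint]
  have hpi : -π ≤ π := by linarith [Real.pi_pos]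
  have hin : ∀ r : ℝ, ∫ θ in Set.Ioo (-π) π, K (r, θ) =
      (2 * π * Complex.exp (((4 * l : ℤ) : ℂ) * (Complex.arg ξ : ℂ) * Complex.I)) *
        ((r : ℂ) * F (r ^ 2 / X) * besselJ (4 * l) (2 * π * r * ‖ξ‖)) := by
    intro r
    rw [← integral_Ioc_eq_integral_Ioo, ← intervalIntegral.integral_of_le hpi]
    simp only [K]
    rw [intervalIntegral.integral_const_mul, intervalIntegral_exp_four_mul_exp_cos_sub]
    ring
  simp only [hin]
  rw [integral_const_mul, integral_Ioi_mul_besselJ _ _ hX (norm_nonneg ξ)]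
  push_cast
  ring

lemma norm_latC_sq (p : ℤ × ℤ) : ‖latC p‖ ^ 2 = (((p.1 ^ 2 + p.2 ^ 2).toNat : ℕ) : ℝ) := by
  have h : (((p.1 ^ 2 + p.2 ^ 2).toNat : ℕ) : ℤ) = p.1 ^ 2 + p.2 ^ 2 :=
    Int.toNat_of_nonneg (by positivity)
  rw [← Int.cast_natCast, h, latC, Complex.sq_norm, Complex.normSq_add_mul_I]
  push_cast
  ring

lemma tau_zero (l : ℤ) : tau l 0 = 1 := by
  have hq : ∀ q : {q : ℤ × ℤ // q.1 ^ 2 + q.2 ^ 2 = ((0 : ℕ) : ℤ)}, q = ⟨0, by simp⟩ := by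
    rintro ⟨⟨a, b⟩, h⟩
    simp only [Nat.cast_zero] at h
    have ha : a = 0 := by nlinarith [sq_nonneg a, sq_nonneg b]
    have hb : b = 0 := by nlinarith [sq_nonneg a, sq_nonneg b]
    subst ha hb
    rfl
  rw [tau, tsum_eq_single ⟨0, by simp⟩ fun q h => absurd (hq q) h]
  simp [latC]

/-- Grouping a sum over the lattice `ℤ²` according to the squared norm. -/
lemma tsum_latC_eq_add_tsum_tau (l : ℤ) (h : ℕ → ℂ) (hs : Summable fun p : ℤ × ℤ =>
      h (p.1 ^ 2 + p.2 ^ 2).toNat *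
        Complex.exp ((l : ℂ) * (Complex.arg (latC p) : ℂ) * Complex.I)) :
    ∑' p : ℤ × ℤ, h (p.1 ^ 2 + p.2 ^ 2).toNat *
        Complex.exp ((l : ℂ) * (Complex.arg (latC p) : ℂ) * Complex.I) =
      h 0 + ∑' n : ℕ+, tau l n * h n := by
  let e := Equiv.sigmaFiberEquiv fun p : ℤ × ℤ => (p.1 ^ 2 + p.2 ^ 2).toNat
  have hfib : ∀ n : ℕ, ∑' c : {p : ℤ × ℤ // (p.1 ^ 2 + p.2 ^ 2).toNat = n},
      h (c.1.1 ^ 2 + c.1.2 ^ 2).toNat *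
        Complex.exp ((l : ℂ) * (Complex.arg (latC c.1) : ℂ) * Complex.I) = tau l n * h n := by
    intro n
    rw [mul_comm, tau, ← tsum_mul_left]
    have hiff : ∀ p : ℤ × ℤ, (p.1 ^ 2 + p.2 ^ 2).toNat = n ↔ p.1 ^ 2 + p.2 ^ 2 = (n : ℤ) := by
      intro p
      have : 0 ≤ p.1 ^ 2 + p.2 ^ 2 := by positivity
      omega
    rw [← (Equiv.subtypeEquivRight hiff).tsum_eq]
    refine tsum_congr fun c => ?_
    rw [c.2]
    rfl
  have hs' := e.summable_iff.2 hs
  have hsn := hs'.sigma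
  have ht := (e.tsum_eq fun p : ℤ × ℤ => h (p.1 ^ 2 + p.2 ^ 2).toNat *
    Complex.exp ((l : ℂ) * (Complex.arg (latC p) : ℂ) * Complex.I)).symm.trans hs'.tsum_sigma
  have hsn' : Summable fun n => tau l n * h n := hsn.congr hfib
  rw [ht.trans (tsum_congr hfib), hsn'.tsum_eq_zero_add, tau_zero, one_mul,
    tsum_pnat_eq_tsum_succ (f := fun n => tau l n * h n)]

lemma besselJNat_zero_right (n : ℕ) : besselJNat n 0 = if n = 0 then 1 else 0 := by
  rw [besselJNat, tsum_eq_single 0]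
  · split_ifs with hn
    · simp [hn]
    · simp [hn]
  · intro m hm
    simp [hm]

lemma besselJ_zero_right (l : ℤ) : besselJ l 0 = if l = 0 then 1 else 0 := by
  rcases lt_trichotomy l 0 with hl | rfl | hl
  · rw [besselJ, if_neg (by omega), besselJNat_zero_right, if_neg (by omega), mul_zero,
      if_neg hl.ne]
  · simp [besselJ, besselJNat_zero_right]
  · rw [besselJ, if_pos hl.le, besselJNat_zero_right, if_neg (by omega), if_neg hl.ne']

lemma hankelB_zero_right (l : ℤ) (F : ℝ → ℂ) :
    hankelB l F 0 = (if l = 0 then 1 else 0) * ∫ r in Set.Ioi (0 : ℝ), F r := by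
  simp only [hankelB, zero_mul, Real.sqrt_zero, mul_zero, besselJ_zero_right]
  rw [integral_mul_const, mul_comm]
  split_ifs <;> simp

/-- Voronoi-type summation formula. -/
theorem voronoi_summation (F : SchwartzMap ℝ ℂ) (hF : Function.support F ⊆ Set.Ioi 0)
    (l : ℤ) (X : ℝ) (hX : 0 < X) :
    ∑' n : ℕ+, tau (4*l) n * F ((n : ℝ) / X)
      = (if l = 0 then (1:ℂ) else 0) * ((π * X : ℝ) : ℂ) * (∫ r in Set.Ioi (0:ℝ), F r)
        + ((π * X : ℝ) : ℂ) * ∑' n : ℕ+, tau (4*l) n * hankelB (4*l) F ((n : ℝ) * X) := by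
  have hF' : ∀ x ≤ 0, F x = 0 := fun x hx => by
    by_contra h
    exact absurd (hF h) (not_lt.2 hx)
  obtain ⟨f, hf⟩ := exists_schwartzMap_radial_mul_exp_arg F hF' l hX
  have h1 : ∀ p : ℤ × ℤ, f (latC p) = F (((p.1 ^ 2 + p.2 ^ 2).toNat : ℝ) / X) *
      Complex.exp (((4 * l : ℤ) : ℂ) * (Complex.arg (latC p) : ℂ) * Complex.I) := fun p => by
    rw [hf, norm_latC_sq]
  have h2 : ∀ p : ℤ × ℤ, 𝓕 f (latC p) =
      ((π * X : ℝ) : ℂ) * hankelB (4 * l) F (((p.1 ^ 2 + p.2 ^ 2).toNat : ℝ) * X) *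
      Complex.exp (((4 * l : ℤ) : ℂ) * (Complex.arg (latC p) : ℂ) * Complex.I) := fun p => by
    rw [SchwartzMap.fourier_coe, fourier_radial_mul_exp_arg F l hX hf, norm_latC_sq]
  have key := f.tsum_latC_eq_tsum_fourier
  rw [tsum_congr h1, tsum_congr h2,
    tsum_latC_eq_add_tsum_tau (4 * l) (fun n => F ((n : ℝ) / X)) (f.summable_latC.congr h1),
    tsum_latC_eq_add_tsum_tau (4 * l) (fun n => ((π * X : ℝ) : ℂ) * hankelB (4 * l) F ((n : ℝ) * X))
      ((𝓕 f).summable_latC.congr h2), Nat.cast_zero, zero_div, hF' 0 le_rfl, zero_add, zero_mul,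
    hankelB_zero_right] at key
  have h4 : 4 * l = 0 ↔ l = 0 := by omega
  simp only [h4, mul_left_comm _ ((π * X : ℝ) : ℂ), tsum_mul_left] at key
  rw [key]
  ring
end
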